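/- For every a, b, c ∈ ℕ there exist constants κ > 0 and C > 0 such that for all η > 0, σ > 0 and all p ∈ ℝ with |p| ≤ κ / R(η,σ), the iterated partial derivative ∂_η^a ∂_σ^b ∂_p^c of the function (η,σ,p) ↦ 1/(⟨p+η+σ⟩ − ⟨η⟩ − ⟨σ⟩) satisfies |∂_η^a ∂_σ^b ∂_p^c [1/(⟨p+η+σ⟩ − ⟨η⟩ − ⟨σ⟩)]| ≤ C · R(η,σ)^{1+c} · ⟨η⟩^{−a} · ⟨σ⟩^{−b}. -/

import Mathlib

/-- The Japanese bracket `⟨x⟩ = √(1 + x²)`. -/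
noncomputable def jb (x : ℝ) : ℝ := Real.sqrt (1 + x ^ 2)

/-- `R(η,σ) = ⟨η⟩⟨σ⟩/(⟨η⟩+⟨σ⟩)`, comparable to `min(⟨η⟩,⟨σ⟩)`. -/
noncomputable def Rf (η σ : ℝ) : ℝ := jb η * jb σ / (jb η + jb σ)

/-- The reciprocal of the `(+,+)` phase, `(⟨p+η+σ⟩ − ⟨η⟩ − ⟨σ⟩)⁻¹`. -/
noncomputable def recPhiPP (η σ p : ℝ) : ℝ := (jb (p + η + σ) - jb η - jb σ)⁻¹

/-- The iterated partial derivative `∂_η^a ∂_σ^b ∂_p^c` of `recPhiPP`, taken one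
variable at a time. -/
noncomputable def DrecPhiPP (a b c : ℕ) (η σ p : ℝ) : ℝ :=
  iteratedDeriv a (fun η' =>
    iteratedDeriv b (fun σ' =>
      iteratedDeriv c (fun p' => recPhiPP η' σ' p') p) σ) η

lemma one_le_jb (x : ℝ) : 1 ≤ jb x :=
  Real.one_le_sqrt.2 (by nlinarith [sq_nonneg x])

lemma jb_pos (x : ℝ) : 0 < jb x := one_pos.trans_le (one_le_jb x)

lemma jb_sq (x : ℝ) : jb x ^ 2 = 1 + x ^ 2 := Real.sq_sqrt (by positivity)

lemma continuous_jb : Continuous jb := by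
  unfold jb; fun_prop

lemma abs_le_jb (x : ℝ) : |x| ≤ jb x :=
  Real.abs_le_sqrt (by linarith)

lemma jb_le_jb {x y : ℝ} (hx : 0 ≤ x) (hxy : x ≤ y) : jb x ≤ jb y :=
  Real.sqrt_le_sqrt (by nlinarith)

lemma hasDerivAt_jb (x : ℝ) : HasDerivAt jb (x / jb x) x := by
  have h : HasDerivAt (fun y : ℝ => 1 + y ^ 2) (2 * x) x := by
    simpa using (hasDerivAt_pow 2 x).const_add 1
  refine (h.sqrt (by positivity)).congr_deriv ?_
  rw [jb, mul_div_mul_left _ _ two_ne_zero]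

lemma hasDerivAt_jb_inv (x : ℝ) :
    HasDerivAt (fun y => (jb y)⁻¹) (-(x / jb x * ((jb x)⁻¹ * (jb x)⁻¹))) x := by
  have h := jb_pos x
  exact ((hasDerivAt_jb x).fun_inv h.ne').congr_deriv (by field_simp)

lemma hasDerivAt_div_jb (x : ℝ) :
    HasDerivAt (fun y => y / jb y) ((jb x)⁻¹ * ((jb x)⁻¹ * (jb x)⁻¹)) x := by
  have h := jb_pos x
  refine ((hasDerivAt_id' x).fun_div (hasDerivAt_jb x) h.ne').congr_deriv ?_
  field_simp
  linarith [jb_sq x]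

lemma jb_le_add_abs_sub (x y : ℝ) : jb x ≤ jb y + |x - y| := by
  have hy := jb_pos y
  refine Real.sqrt_le_iff.2 ⟨by positivity, ?_⟩
  have h : y * (x - y) ≤ jb y * |x - y| :=
    (le_abs_self _).trans (by rw [abs_mul]; gcongr; exact abs_le_jb y)
  nlinarith [jb_sq y, sq_abs (x - y)]

lemma Rf_pos (η σ : ℝ) : 0 < Rf η σ := by
  have := jb_pos η
  have := jb_pos σ
  unfold Rf
  positivity

lemma continuous_Rf_left (σ : ℝ) : Continuous fun η => Rf η σ := by
  have h := continuous_jb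
  unfold Rf
  exact (by fun_prop : Continuous fun η => jb η * jb σ).div (by fun_prop)
    fun η => (add_pos (jb_pos η) (jb_pos σ)).ne'

lemma Rf_comm (η σ : ℝ) : Rf η σ = Rf σ η := by
  unfold Rf
  rw [mul_comm, add_comm]

lemma Rf_le_left (η σ : ℝ) : Rf η σ ≤ jb η := by
  have hη := jb_pos η
  have hσ := jb_pos σ
  rw [Rf, div_le_iff₀ (by positivity)]
  nlinarith

lemma Rf_le_right (η σ : ℝ) : Rf η σ ≤ jb σ := Rf_comm η σ ▸ Rf_le_left σ η

lemma half_le_Rf (η σ : ℝ) : 1 / 2 ≤ Rf η σ := by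
  have hη := one_le_jb η
  have hσ := one_le_jb σ
  rw [Rf, le_div_iff₀ (by positivity)]
  nlinarith

/-- An open neighbourhood of `{p = 0}` in the positive quadrant on which the phase is
nonresonant. -/
def phaseRegion (η σ p : ℝ) : Prop := 0 < η ∧ 0 < σ ∧ |p| * Rf η σ < 1 / 8

namespace phaseRegion

variable {η σ p : ℝ}

lemma symm (h : phaseRegion η σ p) : phaseRegion σ η p :=
  ⟨h.2.1, h.1, Rf_comm η σ ▸ h.2.2⟩

lemma eventually_left (h : phaseRegion η σ p) : ∀ᶠ t in nhds η, phaseRegion t σ p :=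
  (lt_mem_nhds h.1).and ((Filter.Eventually.of_forall fun _ => h.2.1).and
    ((continuous_const.mul (continuous_Rf_left σ)).continuousAt.eventually_lt
      continuousAt_const h.2.2))

lemma eventually_mid (h : phaseRegion η σ p) : ∀ᶠ t in nhds σ, phaseRegion η t p :=
  h.symm.eventually_left.mono fun _ ht => ht.symm

lemma eventually_right (h : phaseRegion η σ p) : ∀ᶠ t in nhds p, phaseRegion η σ t :=
  (Filter.Eventually.of_forall fun _ => h.1).and
    ((Filter.Eventually.of_forall fun _ => h.2.1).and
      ((continuous_abs.mul continuous_const).continuousAt.eventually_lt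
        continuousAt_const h.2.2))

lemma abs_lt (h : phaseRegion η σ p) : |p| < 1 / 4 := by
  nlinarith [half_le_Rf η σ, h.2.2, abs_nonneg p]

lemma jb_left_le (h : phaseRegion η σ p) : jb η ≤ 2 * jb (p + η + σ) := by
  have h₁ := jb_le_jb h.1.le (le_add_of_nonneg_right h.2.1.le)
  have h₂ := jb_le_add_abs_sub (η + σ) (p + η + σ)
  have h₃ : |η + σ - (p + η + σ)| = |p| := by rw [← abs_neg]; congr 1; ring
  linarith [h.abs_lt, one_le_jb (p + η + σ)]

lemma jb_mid_le (h : phaseRegion η σ p) : jb σ ≤ 2 * jb (p + η + σ) := by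
  convert h.symm.jb_left_le using 3
  ring

end phaseRegion

/-- `f` is bounded by a constant multiple of `w` on `phaseRegion`. -/
def PhaseBounded (w f : ℝ → ℝ → ℝ → ℝ) : Prop :=
  ∃ C, 0 ≤ C ∧ ∀ η σ p, phaseRegion η σ p → |f η σ p| ≤ C * w η σ p

namespace PhaseBounded

variable {w v f g : ℝ → ℝ → ℝ → ℝ}

lemma congr (h : PhaseBounded w f)
    (hfg : ∀ η σ p, phaseRegion η σ p → g η σ p = f η σ p) : PhaseBounded w g := by
  obtain ⟨C, hC, hf⟩ := h
  exact ⟨C, hC, fun η σ p hU => hfg η σ p hU ▸ hf η σ p hU⟩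

lemma const_mul_mono (h : PhaseBounded w f) (α K : ℝ) (hK : 0 ≤ K)
    (hw : ∀ η σ p, phaseRegion η σ p → |α| * w η σ p ≤ K * v η σ p) :
    PhaseBounded v (fun η σ p => α * f η σ p) := by
  obtain ⟨C, hC, hf⟩ := h
  refine ⟨C * K, by positivity, fun η σ p hU => ?_⟩
  rw [abs_mul]
  calc |α| * |f η σ p| ≤ |α| * (C * w η σ p) := by gcongr; exact hf η σ p hU
    _ = C * (|α| * w η σ p) := by ring
    _ ≤ C * (K * v η σ p) := mul_le_mul_of_nonneg_left (hw η σ p hU) hC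
    _ = C * K * v η σ p := by ring

lemma add (hf : PhaseBounded w f) (hg : PhaseBounded w g) :
    PhaseBounded w (fun η σ p => f η σ p + g η σ p) := by
  obtain ⟨C, hC, hf⟩ := hf
  obtain ⟨D, hD, hg⟩ := hg
  refine ⟨C + D, by positivity, fun η σ p hU => ?_⟩
  linarith [abs_add_le (f η σ p) (g η σ p), hf η σ p hU, hg η σ p hU]

lemma mul (hf : PhaseBounded w f) (hg : PhaseBounded v g) :
    PhaseBounded (fun η σ p => w η σ p * v η σ p) (fun η σ p => f η σ p * g η σ p) := by
  obtain ⟨C, hC, hf⟩ := hf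
  obtain ⟨D, hD, hg⟩ := hg
  refine ⟨C * D, by positivity, fun η σ p hU => ?_⟩
  rw [abs_mul, mul_mul_mul_comm]
  exact mul_le_mul (hf η σ p hU) (hg η σ p hU) (abs_nonneg _)
    ((abs_nonneg _).trans (hf η σ p hU))

end PhaseBounded

/-- Functions of `(η, σ, p)` with `n` partial derivatives on `phaseRegion`, bounded by the
weight `w`, each `∂_η` gaining `⟨η⟩⁻¹`, each `∂_σ` gaining `⟨σ⟩⁻¹` and each `∂_p` costing
`R(η,σ)`. -/
def IsPhaseSymbol : ℕ → (ℝ → ℝ → ℝ → ℝ) → (ℝ → ℝ → ℝ → ℝ) → Prop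
  | 0, w, f => PhaseBounded w f
  | n + 1, w, f => PhaseBounded w f ∧
    ∃ f₁ f₂ f₃ : ℝ → ℝ → ℝ → ℝ,
      (∀ η σ p, phaseRegion η σ p →
        HasDerivAt (fun t => f t σ p) (f₁ η σ p) η ∧
        HasDerivAt (fun t => f η t p) (f₂ η σ p) σ ∧
        HasDerivAt (fun t => f η σ t) (f₃ η σ p) p) ∧
      IsPhaseSymbol n (fun η σ p => w η σ p / jb η) f₁ ∧
      IsPhaseSymbol n (fun η σ p => w η σ p / jb σ) f₂ ∧
      IsPhaseSymbol n (fun η σ p => w η σ p * Rf η σ) f₃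

namespace IsPhaseSymbol

variable {n : ℕ} {w v f g : ℝ → ℝ → ℝ → ℝ}

lemma bound (h : IsPhaseSymbol n w f) : PhaseBounded w f := by
  cases n with
  | zero => exact h
  | succ n => exact h.1

lemma of_succ (h : IsPhaseSymbol (n + 1) w f) : IsPhaseSymbol n w f := by
  induction n generalizing w f with
  | zero => exact h.bound
  | succ n ih =>
    obtain ⟨hb, f₁, f₂, f₃, hd, h₁, h₂, h₃⟩ := h
    exact ⟨hb, f₁, f₂, f₃, hd, ih h₁, ih h₂, ih h₃⟩

lemma congr (h : IsPhaseSymbol n w f)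
    (hfg : ∀ η σ p, phaseRegion η σ p → g η σ p = f η σ p) : IsPhaseSymbol n w g := by
  cases n with
  | zero => exact PhaseBounded.congr h hfg
  | succ n =>
    obtain ⟨hb, f₁, f₂, f₃, hd, h₁, h₂, h₃⟩ := h
    refine ⟨hb.congr hfg, f₁, f₂, f₃, fun η σ p hU => ?_, h₁, h₂, h₃⟩
    obtain ⟨d₁, d₂, d₃⟩ := hd η σ p hU
    exact ⟨d₁.congr_of_eventuallyEq (hU.eventually_left.mono fun _ ht => hfg _ _ _ ht),
      d₂.congr_of_eventuallyEq (hU.eventually_mid.mono fun _ ht => hfg _ _ _ ht),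
      d₃.congr_of_eventuallyEq (hU.eventually_right.mono fun _ ht => hfg _ _ _ ht)⟩

lemma const_mul_mono (h : IsPhaseSymbol n w f) (α K : ℝ) (hK : 0 ≤ K)
    (hw : ∀ η σ p, phaseRegion η σ p → |α| * w η σ p ≤ K * v η σ p) :
    IsPhaseSymbol n v (fun η σ p => α * f η σ p) := by
  induction n generalizing w v f with
  | zero => exact PhaseBounded.const_mul_mono h α K hK hw
  | succ n ih =>
    obtain ⟨hb, f₁, f₂, f₃, hd, h₁, h₂, h₃⟩ := h
    refine ⟨hb.const_mul_mono α K hK hw, fun η σ p => α * f₁ η σ p,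
      fun η σ p => α * f₂ η σ p, fun η σ p => α * f₃ η σ p, fun η σ p hU => ?_,
      ih h₁ fun η σ p hU => ?_, ih h₂ fun η σ p hU => ?_, ih h₃ fun η σ p hU => ?_⟩
    · obtain ⟨d₁, d₂, d₃⟩ := hd η σ p hU
      exact ⟨d₁.const_mul α, d₂.const_mul α, d₃.const_mul α⟩
    · rw [← mul_div_assoc, ← mul_div_assoc]
      exact div_le_div_of_nonneg_right (hw η σ p hU) (jb_pos η).le
    · rw [← mul_div_assoc, ← mul_div_assoc]
      exact div_le_div_of_nonneg_right (hw η σ p hU) (jb_pos σ).le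
    · rw [← mul_assoc, ← mul_assoc]
      exact mul_le_mul_of_nonneg_right (hw η σ p hU) (Rf_pos η σ).le

lemma mono (h : IsPhaseSymbol n w f) (K : ℝ) (hK : 0 ≤ K)
    (hw : ∀ η σ p, phaseRegion η σ p → w η σ p ≤ K * v η σ p) : IsPhaseSymbol n v f := by
  simpa using h.const_mul_mono 1 K hK (by simpa using hw)

lemma add (hf : IsPhaseSymbol n w f) (hg : IsPhaseSymbol n w g) :
    IsPhaseSymbol n w (fun η σ p => f η σ p + g η σ p) := by
  induction n generalizing w f g with
  | zero => exact PhaseBounded.add hf hg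
  | succ n ih =>
    obtain ⟨hfb, f₁, f₂, f₃, fd, hf₁, hf₂, hf₃⟩ := hf
    obtain ⟨hgb, g₁, g₂, g₃, gd, hg₁, hg₂, hg₃⟩ := hg
    exact ⟨hfb.add hgb, _, _, _, fun η σ p hU => ⟨(fd η σ p hU).1.add (gd η σ p hU).1,
      (fd η σ p hU).2.1.add (gd η σ p hU).2.1, (fd η σ p hU).2.2.add (gd η σ p hU).2.2⟩,
      ih hf₁ hg₁, ih hf₂ hg₂, ih hf₃ hg₃⟩

lemma mul (hf : IsPhaseSymbol n w f) (hg : IsPhaseSymbol n v g) :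
    IsPhaseSymbol n (fun η σ p => w η σ p * v η σ p) (fun η σ p => f η σ p * g η σ p) := by
  induction n generalizing w v f g with
  | zero => exact PhaseBounded.mul hf hg
  | succ n ih =>
    have hf' := hf.of_succ
    have hg' := hg.of_succ
    obtain ⟨hfb, f₁, f₂, f₃, fd, hf₁, hf₂, hf₃⟩ := hf
    obtain ⟨hgb, g₁, g₂, g₃, gd, hg₁, hg₂, hg₃⟩ := hg
    refine ⟨hfb.mul hgb, _, _, _, fun η σ p hU => ⟨(fd η σ p hU).1.mul (gd η σ p hU).1,
      (fd η σ p hU).2.1.mul (gd η σ p hU).2.1, (fd η σ p hU).2.2.mul (gd η σ p hU).2.2⟩,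
      add ?_ ?_, add ?_ ?_, add ?_ ?_⟩
    · exact (ih hf₁ hg').mono 1 zero_le_one fun η σ p _ => le_of_eq (by ring)
    · exact (ih hf' hg₁).mono 1 zero_le_one fun η σ p _ => le_of_eq (by ring)
    · exact (ih hf₂ hg').mono 1 zero_le_one fun η σ p _ => le_of_eq (by ring)
    · exact (ih hf' hg₂).mono 1 zero_le_one fun η σ p _ => le_of_eq (by ring)
    · exact (ih hf₃ hg').mono 1 zero_le_one fun η σ p _ => le_of_eq (by ring)
    · exact (ih hf' hg₃).mono 1 zero_le_one fun η σ p _ => le_of_eq (by ring)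

lemma inv (hf : IsPhaseSymbol n w f) (hw : ∀ η σ p, 0 < w η σ p) (c : ℝ) (hc : 0 < c)
    (hfw : ∀ η σ p, phaseRegion η σ p → c * w η σ p ≤ |f η σ p|) :
    IsPhaseSymbol n (fun η σ p => (w η σ p)⁻¹) (fun η σ p => (f η σ p)⁻¹) := by
  have hb : PhaseBounded (fun η σ p => (w η σ p)⁻¹) (fun η σ p => (f η σ p)⁻¹) := by
    refine ⟨c⁻¹, by positivity, fun η σ p hU => ?_⟩
    rw [abs_inv, ← mul_inv]
    exact inv_anti₀ (mul_pos hc (hw η σ p)) (hfw η σ p hU)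
  induction n with
  | zero => exact hb
  | succ n ih =>
    have hi := ih hf.of_succ
    have hii := hi.mul hi
    obtain ⟨-, f₁, f₂, f₃, fd, hf₁, hf₂, hf₃⟩ := hf
    have hne : ∀ η σ p, phaseRegion η σ p → f η σ p ≠ 0 := fun η σ p hU =>
      abs_pos.1 ((mul_pos hc (hw η σ p)).trans_le (hfw η σ p hU))
    refine ⟨hb, fun η σ p => -1 * (f₁ η σ p * ((f η σ p)⁻¹ * (f η σ p)⁻¹)),
      fun η σ p => -1 * (f₂ η σ p * ((f η σ p)⁻¹ * (f η σ p)⁻¹)),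
      fun η σ p => -1 * (f₃ η σ p * ((f η σ p)⁻¹ * (f η σ p)⁻¹)), fun η σ p hU => ?_,
      (hf₁.mul hii).const_mul_mono _ 1 zero_le_one fun η σ p hU => ?_,
      (hf₂.mul hii).const_mul_mono _ 1 zero_le_one fun η σ p hU => ?_,
      (hf₃.mul hii).const_mul_mono _ 1 zero_le_one fun η σ p hU => ?_⟩
    · have hf0 := hne η σ p hU
      obtain ⟨d₁, d₂, d₃⟩ := fd η σ p hU
      exact ⟨(d₁.fun_inv hf0).congr_deriv (by field_simp),
        (d₂.fun_inv hf0).congr_deriv (by field_simp),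
        (d₃.fun_inv hf0).congr_deriv (by field_simp)⟩
    all_goals
      have := hw η σ p
      have := jb_pos η
      have := jb_pos σ
      rw [abs_neg, abs_one]
      apply le_of_eq
      field_simp

lemma zero : IsPhaseSymbol n (fun _ _ _ => 0) (fun _ _ _ => 0) := by
  have hb : PhaseBounded (fun _ _ _ => 0) (fun _ _ _ => 0) := ⟨0, le_rfl, by simp⟩
  induction n with
  | zero => exact hb
  | succ n ih =>
    exact ⟨hb, _, _, _, fun η σ p _ => ⟨hasDerivAt_const _ _, hasDerivAt_const _ _,
      hasDerivAt_const _ _⟩, by simpa using ih, by simpa using ih, by simpa using ih⟩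

lemma one : IsPhaseSymbol n (fun _ _ _ => 1) (fun _ _ _ => 1) := by
  have hb : PhaseBounded (fun _ _ _ => 1) (fun _ _ _ => 1) := ⟨1, zero_le_one, by simp⟩
  cases n with
  | zero => exact hb
  | succ n =>
    refine ⟨hb, _, _, _, fun η σ p _ => ⟨hasDerivAt_const _ _, hasDerivAt_const _ _,
      hasDerivAt_const _ _⟩, ?_, ?_, ?_⟩
    · exact zero.mono 1 zero_le_one fun η σ p _ => by have := jb_pos η; positivity
    · exact zero.mono 1 zero_le_one fun η σ p _ => by have := jb_pos σ; positivity
    · exact zero.mono 1 zero_le_one fun η σ p _ => by have := Rf_pos η σ; positivity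

lemma deriv_left (h : IsPhaseSymbol (n + 1) w f) :
    IsPhaseSymbol n (fun η σ p => w η σ p / jb η)
      (fun η σ p => deriv (fun t => f t σ p) η) := by
  obtain ⟨-, f₁, f₂, f₃, hd, h₁, h₂, h₃⟩ := h
  exact h₁.congr fun η σ p hU => (hd η σ p hU).1.deriv

lemma deriv_mid (h : IsPhaseSymbol (n + 1) w f) :
    IsPhaseSymbol n (fun η σ p => w η σ p / jb σ)
      (fun η σ p => deriv (fun t => f η t p) σ) := by
  obtain ⟨-, f₁, f₂, f₃, hd, h₁, h₂, h₃⟩ := h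
  exact h₂.congr fun η σ p hU => (hd η σ p hU).2.1.deriv

lemma deriv_right (h : IsPhaseSymbol (n + 1) w f) :
    IsPhaseSymbol n (fun η σ p => w η σ p * Rf η σ)
      (fun η σ p => deriv (fun t => f η σ t) p) := by
  obtain ⟨-, f₁, f₂, f₃, hd, h₁, h₂, h₃⟩ := h
  exact h₃.congr fun η σ p hU => (hd η σ p hU).2.2.deriv

lemma iteratedDeriv_left {a : ℕ} (h : IsPhaseSymbol (n + a) w f) :
    IsPhaseSymbol n (fun η σ p => w η σ p / jb η ^ a)
      (fun η σ p => iteratedDeriv a (fun t => f t σ p) η) := by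
  induction a generalizing n with
  | zero => simpa using h
  | succ a ih =>
    have h' : IsPhaseSymbol (n + 1 + a) w f := by rwa [add_right_comm]
    simpa only [iteratedDeriv_succ, pow_succ, div_div] using (ih h').deriv_left

lemma iteratedDeriv_mid {b : ℕ} (h : IsPhaseSymbol (n + b) w f) :
    IsPhaseSymbol n (fun η σ p => w η σ p / jb σ ^ b)
      (fun η σ p => iteratedDeriv b (fun t => f η t p) σ) := by
  induction b generalizing n with
  | zero => simpa using h
  | succ b ih =>
    have h' : IsPhaseSymbol (n + 1 + b) w f := by rwa [add_right_comm]
    simpa only [iteratedDeriv_succ, pow_succ, div_div] using (ih h').deriv_mid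

lemma iteratedDeriv_right {c : ℕ} (h : IsPhaseSymbol (n + c) w f) :
    IsPhaseSymbol n (fun η σ p => w η σ p * Rf η σ ^ c)
      (fun η σ p => iteratedDeriv c (fun t => f η σ t) p) := by
  induction c generalizing n with
  | zero => simpa using h
  | succ c ih =>
    have h' : IsPhaseSymbol (n + 1 + c) w f := by rwa [add_right_comm]
    simpa only [iteratedDeriv_succ, pow_succ, mul_assoc] using (ih h').deriv_right

end IsPhaseSymbol

/-- Linear forms whose coefficients are dominated by their bracket on `phaseRegion`. -/
def IsAdmissibleForm (α β γ : ℝ) : Prop :=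
  ∀ η σ p, phaseRegion η σ p →
    |α| * jb η ≤ 2 * jb (γ * p + α * η + β * σ) ∧
    |β| * jb σ ≤ 2 * jb (γ * p + α * η + β * σ) ∧
    |γ| ≤ 2 * Rf η σ * jb (γ * p + α * η + β * σ) ∧
    -(1 / 4) ≤ γ * p + α * η + β * σ

namespace IsAdmissibleForm

variable {n : ℕ} {α β γ : ℝ}

lemma left : IsAdmissibleForm 1 0 0 := fun η σ p hU => by
  have h₁ := jb_pos η
  have h₂ := Rf_pos η σ
  simp only [one_mul, zero_mul, add_zero, zero_add, abs_one, abs_zero]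
  exact ⟨by linarith, by positivity, by positivity, by linarith [hU.1]⟩

lemma mid : IsAdmissibleForm 0 1 0 := fun η σ p hU => by
  have h₁ := jb_pos σ
  have h₂ := Rf_pos η σ
  simp only [one_mul, zero_mul, add_zero, zero_add, abs_one, abs_zero]
  exact ⟨by positivity, by linarith, by positivity, by linarith [hU.2.1]⟩

lemma sum : IsAdmissibleForm 1 1 1 := fun η σ p hU => by
  have h₁ := hU.jb_left_le
  have h₂ := hU.jb_mid_le
  simp only [abs_one, one_mul]
  exact ⟨h₁, h₂, by nlinarith [half_le_Rf η σ, one_le_jb (p + η + σ)],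
    by linarith [hU.1, hU.2.1, neg_abs_le p, hU.abs_lt]⟩

/-- The chain rule in each variable for a function of a linear form. -/
lemma hasDerivAt_comp {F : ℝ → ℝ} {F' η σ p : ℝ} (α β γ : ℝ)
    (hF : HasDerivAt F F' (γ * p + α * η + β * σ)) :
    HasDerivAt (fun t => F (γ * p + α * t + β * σ)) (α * F') η ∧
    HasDerivAt (fun t => F (γ * p + α * η + β * t)) (β * F') σ ∧
    HasDerivAt (fun t => F (γ * t + α * η + β * σ)) (γ * F') p := by
  refine ⟨?_, ?_, ?_⟩
  · have h : HasDerivAt (fun t => γ * p + α * t + β * σ) α η := by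
      simpa using (((hasDerivAt_id' η).const_mul α).const_add (γ * p)).add_const (β * σ)
    exact (hF.comp η h).congr_deriv (mul_comm _ _)
  · have h : HasDerivAt (fun t => γ * p + α * η + β * t) β σ := by
      simpa using ((hasDerivAt_id' σ).const_mul β).const_add (γ * p + α * η)
    exact (hF.comp σ h).congr_deriv (mul_comm _ _)
  · have h : HasDerivAt (fun t => γ * t + α * η + β * σ) γ p := by
      simpa using (((hasDerivAt_id' p).const_mul γ).add_const (α * η)).add_const (β * σ)
    exact (hF.comp p h).congr_deriv (mul_comm _ _)

/-- Symbol bounds for a function of an admissible form from those for its derivative. -/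
lemma isPhaseSymbol_comp (hℓ : IsAdmissibleForm α β γ) {F G : ℝ → ℝ} (k : ℕ)
    (hF : ∀ x, HasDerivAt F (G x) x)
    (hb : PhaseBounded (fun η σ p => (jb (γ * p + α * η + β * σ))⁻¹ ^ k)
      (fun η σ p => F (γ * p + α * η + β * σ)))
    (hG : IsPhaseSymbol n (fun η σ p => (jb (γ * p + α * η + β * σ))⁻¹ ^ (k + 1))
      (fun η σ p => G (γ * p + α * η + β * σ))) :
    IsPhaseSymbol (n + 1) (fun η σ p => (jb (γ * p + α * η + β * σ))⁻¹ ^ k)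
      (fun η σ p => F (γ * p + α * η + β * σ)) := by
  refine ⟨hb, _, _, _, fun η σ p _ => hasDerivAt_comp α β γ (hF _),
    hG.const_mul_mono α 2 zero_le_two fun η σ p hU => ?_,
    hG.const_mul_mono β 2 zero_le_two fun η σ p hU => ?_,
    hG.const_mul_mono γ 2 zero_le_two fun η σ p hU => ?_⟩ <;>
  obtain ⟨h₁, h₂, h₃, -⟩ := hℓ η σ p hU <;>
  have hx := jb_pos (γ * p + α * η + β * σ) <;>
  set y := jb (γ * p + α * η + β * σ) <;>
  rw [pow_succ]
  · have := jb_pos η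
    have h : |α| * y⁻¹ ≤ 2 / jb η := by
      rw [← div_eq_mul_inv, div_le_div_iff₀ hx this]
      exact h₁
    calc |α| * (y⁻¹ ^ k * y⁻¹) = y⁻¹ ^ k * (|α| * y⁻¹) := by ring
      _ ≤ y⁻¹ ^ k * (2 / jb η) := by gcongr
      _ = _ := by ring
  · have := jb_pos σ
    have h : |β| * y⁻¹ ≤ 2 / jb σ := by
      rw [← div_eq_mul_inv, div_le_div_iff₀ hx this]
      exact h₂
    calc |β| * (y⁻¹ ^ k * y⁻¹) = y⁻¹ ^ k * (|β| * y⁻¹) := by ring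
      _ ≤ y⁻¹ ^ k * (2 / jb σ) := by gcongr
      _ = _ := by ring
  · have h : |γ| * y⁻¹ ≤ 2 * Rf η σ := by
      rw [← div_eq_mul_inv, div_le_iff₀ hx]
      exact h₃
    calc |γ| * (y⁻¹ ^ k * y⁻¹) = y⁻¹ ^ k * (|γ| * y⁻¹) := by ring
      _ ≤ y⁻¹ ^ k * (2 * Rf η σ) := by gcongr
      _ = _ := by ring

lemma isPhaseSymbol_div_and_inv (hℓ : IsAdmissibleForm α β γ) (n : ℕ) :
    IsPhaseSymbol n (fun η σ p => (jb (γ * p + α * η + β * σ))⁻¹ ^ 0)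
      (fun η σ p => (γ * p + α * η + β * σ) / jb (γ * p + α * η + β * σ)) ∧
    IsPhaseSymbol n (fun η σ p => (jb (γ * p + α * η + β * σ))⁻¹ ^ 1)
      (fun η σ p => (jb (γ * p + α * η + β * σ))⁻¹) := by
  have hs : PhaseBounded (fun η σ p => (jb (γ * p + α * η + β * σ))⁻¹ ^ 0)
      (fun η σ p => (γ * p + α * η + β * σ) / jb (γ * p + α * η + β * σ)) := by
    refine ⟨1, zero_le_one, fun η σ p _ => ?_⟩
    beta_reduce
    rw [abs_div, abs_of_pos (jb_pos _), pow_zero, mul_one]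
    exact div_le_one_of_le₀ (abs_le_jb _) (jb_pos _).le
  have hu : PhaseBounded (fun η σ p => (jb (γ * p + α * η + β * σ))⁻¹ ^ 1)
      (fun η σ p => (jb (γ * p + α * η + β * σ))⁻¹) := by
    refine ⟨1, zero_le_one, fun η σ p _ => ?_⟩
    beta_reduce
    rw [abs_of_pos (inv_pos.2 (jb_pos _)), pow_one, one_mul]
  induction n with
  | zero => exact ⟨hs, hu⟩
  | succ n ih =>
    obtain ⟨ihs, ihu⟩ := ih
    refine ⟨hℓ.isPhaseSymbol_comp 0 hasDerivAt_div_jb hs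
      ((ihu.mul (ihu.mul ihu)).mono 1 zero_le_one fun η σ p _ => ?_),
      hℓ.isPhaseSymbol_comp 1 hasDerivAt_jb_inv hu ?_⟩
    · have h := inv_le_one_of_one_le₀ (one_le_jb (γ * p + α * η + β * σ))
      have h0 := inv_pos.2 (jb_pos (γ * p + α * η + β * σ))
      simp only [pow_one, zero_add, one_mul]
      exact mul_le_of_le_one_right h0.le (mul_le_one₀ h h0.le h)
    · have := (ihs.mul (ihu.mul ihu)).const_mul_mono
        (v := fun η σ p => (jb (γ * p + α * η + β * σ))⁻¹ ^ (1 + 1)) (-1) 1 zero_le_one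
        fun η σ p _ => le_of_eq (by rw [abs_neg, abs_one]; ring)
      simpa only [neg_one_mul] using this

lemma isPhaseSymbol_div_sub_one (hℓ : IsAdmissibleForm α β γ) (n : ℕ) :
    IsPhaseSymbol n (fun η σ p => (jb (γ * p + α * η + β * σ))⁻¹ ^ 2)
      (fun η σ p => (γ * p + α * η + β * σ) / jb (γ * p + α * η + β * σ) - 1) := by
  have hb : PhaseBounded (fun η σ p => (jb (γ * p + α * η + β * σ))⁻¹ ^ 2)
      (fun η σ p => (γ * p + α * η + β * σ) / jb (γ * p + α * η + β * σ) - 1) := by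
    refine ⟨2, zero_le_two, fun η σ p hU => ?_⟩
    have hx := (hℓ η σ p hU).2.2.2
    beta_reduce
    set x := γ * p + α * η + β * σ
    have h := one_le_jb x
    have h0 := jb_pos x
    have hle : x ≤ jb x := (le_abs_self x).trans (abs_le_jb x)
    have hsq := jb_sq x
    rw [div_sub_one h0.ne', abs_div, abs_of_pos h0, abs_of_nonpos (by linarith), inv_pow,
      ← div_eq_mul_inv, div_le_div_iff₀ h0 (by positivity)]
    nlinarith
  cases n with
  | zero => exact hb
  | succ n =>
    have hu := (hℓ.isPhaseSymbol_div_and_inv n).2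
    exact hℓ.isPhaseSymbol_comp (F := fun x => x / jb x - 1) 2
      (fun x => (hasDerivAt_div_jb x).sub_const 1) hb
      ((hu.mul (hu.mul hu)).mono 1 zero_le_one fun η σ p _ => le_of_eq (by ring))

end IsAdmissibleForm

lemma phase_at_zero_bounds {η σ : ℝ} (hη : 0 < η) (hσ : 0 < σ) :
    (Rf η σ)⁻¹ / 4 ≤ jb η + jb σ - jb (η + σ) ∧
    jb η + jb σ - jb (η + σ) ≤ 2 * (Rf η σ)⁻¹ := by
  have hA := one_le_jb η
  have hB := one_le_jb σ
  have hE := jb_pos (η + σ)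
  have hA2 := jb_sq η
  have hB2 := jb_sq σ
  have hE2 := jb_sq (η + σ)
  have hAη : η ≤ jb η := (le_abs_self η).trans (abs_le_jb η)
  have hBσ : σ ≤ jb σ := (le_abs_self σ).trans (abs_le_jb σ)
  rw [Rf, inv_div]
  set A := jb η
  set B := jb σ
  set E := jb (η + σ)
  have hq : 0 < η * σ := mul_pos hη hσ
  have hqP : η * σ ≤ A * B := by gcongr
  have hP : 1 ≤ A * B := one_le_mul_of_one_le_of_one_le hA hB
  have hPq : (A * B - η * σ) * (A * B + η * σ) = A ^ 2 + B ^ 2 - 1 := by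
    calc _ = A ^ 2 * B ^ 2 - η ^ 2 * σ ^ 2 := by ring
      _ = _ := by rw [hA2, hB2]; ring
  have hD : (A + B - E) * (A + B + E) = 1 + 2 * (A * B - η * σ) := by
    linear_combination hA2 + hB2 - hE2
  have hS : 0 < A + B := by linarith
  have hD0 : 0 < A + B - E :=
    pos_of_mul_pos_left (by rw [hD]; linarith) (by linarith : 0 ≤ A + B + E)
  have hP0 : 0 < A * B := by linarith
  constructor
  · rw [div_div, div_le_iff₀ (by positivity)]
    refine le_of_mul_le_mul_right ?_ hS
    have h₁ : 1 + 2 * (A * B - η * σ) ≤ (A + B - E) * (2 * (A + B)) := by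
      rw [← hD]
      gcongr
      linarith
    nlinarith [mul_le_mul_of_nonneg_left h₁ hP0.le, sq_nonneg (A - B),
      mul_nonneg (sub_nonneg.2 hqP) (sub_nonneg.2 hqP)]
  · rw [← mul_div_assoc, le_div_iff₀ hP0]
    refine le_of_mul_le_mul_right ?_ hS
    have h₁ : (A + B - E) * (A + B) ≤ 1 + 2 * (A * B - η * σ) := by
      rw [← hD]
      exact mul_le_mul_of_nonneg_left (by linarith) hD0.le
    nlinarith [mul_le_mul_of_nonneg_left h₁ hP0.le, mul_nonneg (sub_nonneg.2 hqP) hq.le]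

lemma phase_bounds {η σ p : ℝ} (hU : phaseRegion η σ p) :
    1 / 8 * (Rf η σ)⁻¹ ≤ |jb (p + η + σ) - jb η - jb σ| ∧
    |jb (p + η + σ) - jb η - jb σ| ≤ 3 * (Rf η σ)⁻¹ := by
  obtain ⟨h₁, h₂⟩ := phase_at_zero_bounds hU.1 hU.2.1
  have hp : |p| ≤ 1 / 8 * (Rf η σ)⁻¹ := by
    rw [← div_eq_mul_inv, le_div_iff₀ (Rf_pos η σ)]
    exact hU.2.2.le
  have h₃ := jb_le_add_abs_sub (p + η + σ) (η + σ)
  have h₄ := jb_le_add_abs_sub (η + σ) (p + η + σ)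
  rw [abs_sub_comm] at h₄
  rw [show p + η + σ - (η + σ) = p by ring] at h₃ h₄
  have := inv_pos.2 (Rf_pos η σ)
  rw [abs_of_nonpos (by linarith)]
  constructor <;> linarith

lemma inv_sq_le {r x y : ℝ} (hr : 0 < r) (hx : 0 < x) (hry : r ≤ 2 * y) (hxy : x ≤ 2 * y) :
    y⁻¹ ^ 2 ≤ 4 * (r⁻¹ / x) := by
  have hy : 0 < y := by linarith
  rw [inv_pow, ← one_div, ← one_div, div_div, ← mul_div_assoc,
    div_le_div_iff₀ (by positivity) (by positivity)]
  nlinarith [mul_le_mul hry hxy hx.le (by positivity)]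

lemma isPhaseSymbol_phase (n : ℕ) :
    IsPhaseSymbol n (fun η σ _ => (Rf η σ)⁻¹)
      (fun η σ p => jb (p + η + σ) - jb η - jb σ) := by
  have hb : PhaseBounded (fun η σ _ => (Rf η σ)⁻¹)
      (fun η σ p => jb (p + η + σ) - jb η - jb σ) :=
    ⟨3, zero_le_three, fun η σ p hU => (phase_bounds hU).2⟩
  cases n with
  | zero => exact hb
  | succ n =>
    have hsum := IsAdmissibleForm.sum.isPhaseSymbol_div_sub_one n
    have hleft := IsAdmissibleForm.left.isPhaseSymbol_div_sub_one n
    have hmid := IsAdmissibleForm.mid.isPhaseSymbol_div_sub_one n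
    have hdiv := (IsAdmissibleForm.sum.isPhaseSymbol_div_and_inv n).1
    simp only [one_mul, zero_mul, add_zero, zero_add, pow_zero] at hsum hleft hmid hdiv
    refine ⟨hb, _, _, _, fun η σ p _ => ?_,
      (hsum.mono 4 zero_le_four fun η σ p hU => ?_).add
        (hleft.const_mul_mono (-1) 4 zero_le_four fun η σ p hU => ?_),
      (hsum.mono 4 zero_le_four fun η σ p hU => ?_).add
        (hmid.const_mul_mono (-1) 4 zero_le_four fun η σ p hU => ?_),
      hdiv.mono 1 zero_le_one fun η σ p hU => ?_⟩
    · obtain ⟨d₁, d₂, d₃⟩ :=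
        IsAdmissibleForm.hasDerivAt_comp 1 1 1 (hasDerivAt_jb (1 * p + 1 * η + 1 * σ))
      simp only [one_mul] at d₁ d₂ d₃
      exact ⟨((d₁.sub (hasDerivAt_jb η)).sub_const _).congr_deriv (by ring),
        ((d₂.sub_const _).sub (hasDerivAt_jb σ)).congr_deriv (by ring),
        (d₃.sub_const _).sub_const _⟩
    · exact inv_sq_le (Rf_pos η σ) (jb_pos η) ((Rf_le_left η σ).trans hU.jb_left_le)
        hU.jb_left_le
    · rw [abs_neg, abs_one, one_mul]
      exact inv_sq_le (Rf_pos η σ) (jb_pos η) (by linarith [Rf_le_left η σ, jb_pos η])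
        (by linarith [jb_pos η])
    · exact inv_sq_le (Rf_pos η σ) (jb_pos σ) ((Rf_le_right η σ).trans hU.jb_mid_le)
        hU.jb_mid_le
    · rw [abs_neg, abs_one, one_mul]
      exact inv_sq_le (Rf_pos η σ) (jb_pos σ) (by linarith [Rf_le_right η σ, jb_pos σ])
        (by linarith [jb_pos σ])
    · rw [inv_mul_cancel₀ (Rf_pos η σ).ne', mul_one]

/-- Derivative bounds for the reciprocal of the `(+,+)` Klein–Gordon phase near the
set `ξ = η + σ` (Lemma 6.2 (i) in the paper):
`|∂_η^a ∂_σ^b ∂_p^c (⟨p+η+σ⟩−⟨η⟩−⟨σ⟩)⁻¹| ≲ R(η,σ)^{1+c} ⟨η⟩^{−a} ⟨σ⟩^{−b}`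
for `η, σ > 0` and `|p| ≤ κ/R(η,σ)`. -/
theorem derivative_bounds_reciprocal_phase_pp (a b c : ℕ) :
    ∃ κ C : ℝ, 0 < κ ∧ 0 < C ∧
      ∀ η σ p : ℝ, 0 < η → 0 < σ → |p| ≤ κ / Rf η σ →
        |DrecPhiPP a b c η σ p| ≤
          C * Rf η σ ^ (1 + c) / (jb η ^ a * jb σ ^ b) := by
  have h : IsPhaseSymbol (0 + a + b + c) (fun η σ _ => Rf η σ) recPhiPP := by
    have h := (isPhaseSymbol_phase (0 + a + b + c)).inv
      (fun η σ _ => inv_pos.2 (Rf_pos η σ)) (1 / 8) (by norm_num)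
      fun η σ p hU => (phase_bounds hU).1
    simp only [inv_inv] at h
    exact h
  obtain ⟨C, hC, hb⟩ := h.iteratedDeriv_right.iteratedDeriv_mid.iteratedDeriv_left.bound
  refine ⟨1 / 16, C + 1, by norm_num, by positivity, fun η σ p hη hσ hp => ?_⟩
  have hR := Rf_pos η σ
  have h₁ := jb_pos η
  have h₂ := jb_pos σ
  rw [le_div_iff₀ hR] at hp
  refine (hb η σ p ⟨hη, hσ, by linarith⟩).trans ?_
  calc C * (Rf η σ * Rf η σ ^ c / jb σ ^ b / jb η ^ a)
      = C * Rf η σ ^ (1 + c) / (jb η ^ a * jb σ ^ b) := by rw [pow_add, pow_one]; ring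
    _ ≤ _ := by gcongr; linarith
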